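/- For the 5×5 binary kernel T_5 = [[1,1,1,1,1],[1,0,0,0,0],[1,0,0,1,0],[1,1,1,0,0],[0,0,1,1,1]], the minimum-distance spectrum is S_{T_5} = (5, 3, 2, 1, 1), attained by the row sets R_5^1 = {0}, R_5^2 = {3,4}, R_5^3 = {2,3,4}, R_5^4 = {1,2,3,4} and R_5^5 = {0,1,2,3,4} respectively. -/

import Mathlib

/-!
Over `𝔽₂` every scalar is `0` or `1`, so the span of the rows indexed by `R` consists exactly of
the sums of the rows over the subsets of `R` (`mem_span_rows_iff`). Minimum distances thus become
finite conditions on subsets of `Fin 5`: a subset sum of minimal weight certifies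
`minDist T5 R = d` (`minDist_eq`), and one nonzero sum of weight at most `d` inside each `k`-subset
of rows certifies `spec T5 k ≤ d` (`spec_eq`). All of these are checked by kernel evaluation.
-/


open Matrix

/-- The kernel `T₅`. -/
def T5 : Matrix (Fin 5) (Fin 5) (ZMod 2) :=
  !![1, 1, 1, 1, 1;
     1, 0, 0, 0, 0;
     1, 0, 0, 1, 0;
     1, 1, 1, 0, 0;
     0, 0, 1, 1, 1]

/-- Minimum distance of the code generated by the rows of `T` indexed by `R`:
the least Hamming weight of a nonzero vector in the `𝔽₂`-span of those rows. -/
noncomputable def minDist {p m : ℕ} (T : Matrix (Fin p) (Fin m) (ZMod 2))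
    (R : Finset (Fin p)) : ℕ :=
  sInf {w : ℕ | ∃ x ∈ Submodule.span (ZMod 2) ((fun i => T i) '' (R : Set (Fin p))),
    x ≠ 0 ∧ hammingNorm x = w}

/-- Minimum-distance spectrum: `spec T k` is the largest minimum distance achievable
by a sub-code generated by `k` rows of `T`. -/
noncomputable def spec {p m : ℕ} (T : Matrix (Fin p) (Fin m) (ZMod 2)) (k : ℕ) : ℕ :=
  ((Finset.univ : Finset (Fin p)).powersetCard k).sup (minDist T)

lemma mem_span_rows_iff {p m : ℕ} (T : Matrix (Fin p) (Fin m) (ZMod 2)) (R : Finset (Fin p))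
    (x : Fin m → ZMod 2) :
    x ∈ Submodule.span (ZMod 2) ((fun i => T i) '' (R : Set (Fin p))) ↔
      ∃ S ∈ R.powerset, ∑ i ∈ S, T i = x := by
  constructor
  · intro hx
    obtain ⟨c, rfl⟩ := (Submodule.mem_span_image_finset_iff_exists_fun' (ZMod 2)).1 hx
    refine ⟨R.filter (fun i => c i = 1), by simp, ?_⟩
    refine (Finset.sum_filter _ _).trans ?_
    refine Finset.sum_congr rfl fun i _ => ?_
    have h01 : ∀ a : ZMod 2, a = 0 ∨ a = 1 := by decide
    rcases h01 (c i) with h | h <;> simp [h]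
  · rintro ⟨S, hS, rfl⟩
    exact Submodule.sum_mem _ fun i hi =>
      Submodule.subset_span ⟨i, Finset.mem_powerset.1 hS hi, rfl⟩

lemma minDist_le {p m : ℕ} {T : Matrix (Fin p) (Fin m) (ZMod 2)} {R : Finset (Fin p)} {d : ℕ}
    (h : ∃ S ∈ R.powerset, ∑ i ∈ S, T i ≠ 0 ∧ hammingNorm (∑ i ∈ S, T i) ≤ d) :
    minDist T R ≤ d := by
  obtain ⟨S, hS, h0, hd⟩ := h
  refine le_trans ?_ hd
  exact Nat.sInf_le ⟨_, (mem_span_rows_iff T R _).2 ⟨S, hS, rfl⟩, h0, rfl⟩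

lemma minDist_eq {p m : ℕ} {T : Matrix (Fin p) (Fin m) (ZMod 2)} {R : Finset (Fin p)} {d : ℕ}
    (h : ∃ S ∈ R.powerset, ∑ i ∈ S, T i ≠ 0 ∧ hammingNorm (∑ i ∈ S, T i) ≤ d)
    (h' : ∀ S ∈ R.powerset, ∑ i ∈ S, T i ≠ 0 → d ≤ hammingNorm (∑ i ∈ S, T i)) :
    minDist T R = d := by
  refine le_antisymm (minDist_le h) ?_
  obtain ⟨S, hS, h0, -⟩ := h
  -- Nonemptiness matters here: the infimum of the empty set of naturals is `0`.
  refine le_csInf ⟨_, _, (mem_span_rows_iff T R _).2 ⟨S, hS, rfl⟩, h0, rfl⟩ ?_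
  rintro w ⟨x, hx, hx0, rfl⟩
  obtain ⟨S', hS', rfl⟩ := (mem_span_rows_iff T R x).1 hx
  exact h' S' hS' hx0

lemma spec_eq {p m : ℕ} {T : Matrix (Fin p) (Fin m) (ZMod 2)} {k d : ℕ} {R : Finset (Fin p)}
    (hR : R.card = k) (hd : minDist T R = d)
    (h : ∀ R ∈ (Finset.univ : Finset (Fin p)).powersetCard k,
      ∃ S ∈ R.powerset, ∑ i ∈ S, T i ≠ 0 ∧ hammingNorm (∑ i ∈ S, T i) ≤ d) :
    spec T k = d := by
  refine le_antisymm (Finset.sup_le fun R' hR' => minDist_le (h R' hR')) ?_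
  rw [← hd]
  exact Finset.le_sup (f := minDist T) (by simp [Finset.mem_powersetCard, hR])

/-- The minimum-distance spectrum of `T₅` is `(5,3,2,1,1)`, attained by the row sets
`{0}`, `{3,4}`, `{2,3,4}`, `{1,2,3,4}` and `{0,1,2,3,4}`. -/
theorem stmt8 :
    spec T5 1 = 5 ∧ minDist T5 ({0} : Finset (Fin 5)) = 5 ∧
    spec T5 2 = 3 ∧ minDist T5 ({3, 4} : Finset (Fin 5)) = 3 ∧
    spec T5 3 = 2 ∧ minDist T5 ({2, 3, 4} : Finset (Fin 5)) = 2 ∧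
    spec T5 4 = 1 ∧ minDist T5 ({1, 2, 3, 4} : Finset (Fin 5)) = 1 ∧
    spec T5 5 = 1 ∧ minDist T5 ({0, 1, 2, 3, 4} : Finset (Fin 5)) = 1 := by
  have h1 : minDist T5 ({0} : Finset (Fin 5)) = 5 :=
    minDist_eq (by decide +kernel) (by decide +kernel)
  have h2 : minDist T5 ({3, 4} : Finset (Fin 5)) = 3 :=
    minDist_eq (by decide +kernel) (by decide +kernel)
  have h3 : minDist T5 ({2, 3, 4} : Finset (Fin 5)) = 2 :=
    minDist_eq (by decide +kernel) (by decide +kernel)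
  have h4 : minDist T5 ({1, 2, 3, 4} : Finset (Fin 5)) = 1 :=
    minDist_eq (by decide +kernel) (by decide +kernel)
  have h5 : minDist T5 ({0, 1, 2, 3, 4} : Finset (Fin 5)) = 1 :=
    minDist_eq (by decide +kernel) (by decide +kernel)
  exact ⟨spec_eq rfl h1 (by decide +kernel), h1,
    spec_eq rfl h2 (by decide +kernel), h2,
    spec_eq rfl h3 (by decide +kernel), h3,
    spec_eq rfl h4 (by decide +kernel), h4,
    spec_eq rfl h5 (by decide +kernel), h5⟩
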